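/- Let G be a group and k a field. For every natural number n there is an isomorphism of k-vector spaces HH_n(k[G], k[G]) ≅ ⊕_{c ∈ ⟨G⟩} H_n(C_G(g_c); k), where ⟨G⟩ is the set of conjugacy classes of G, g_c is a chosen representative of the conjugacy class c, and C_G(g_c) is the centralizer of g_c in G. -/

import Mathlib

open TensorProduct MulOpposite CategoryTheory

section Machinery

variable (k : Type) [CommRing k] (S : Type) [Ring S] [Algebra k S] (P : Set (S × S))

/-- The `k`-submodule of (the restriction of scalars of) an `S`-module `N` generated by all
differences `p.1 • n - p.2 • n` for pairs `p ∈ P` and `n ∈ N`. -/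
noncomputable def relSub (N : ModuleCat S) :
    Submodule k ((ModuleCat.restrictScalars (algebraMap k S)).obj N) :=
  Submodule.span k {x | ∃ p ∈ P, ∃ n : N, x = p.1 • n - p.2 • n}

/-- The "coinvariants"-type additive functor sending an `S`-module `N` to its quotient,
as a `k`-module, by the span of all elements `p.1 • n - p.2 • n` for `p ∈ P`, `n ∈ N`. -/
noncomputable def coinvFunctor : ModuleCat S ⥤ ModuleCat k where
  obj N := ModuleCat.of k (((ModuleCat.restrictScalars (algebraMap k S)).obj N) ⧸ relSub k S P N)
  map {N N'} f := ModuleCat.ofHom (Submodule.mapQ (relSub k S P N) (relSub k S P N')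
      ((ModuleCat.restrictScalars (algebraMap k S)).map f).hom (by
    rw [relSub, Submodule.span_le]
    rintro x ⟨p, hp, n, rfl⟩
    have : ((ModuleCat.restrictScalars (algebraMap k S)).map f) (p.1 • n - p.2 • n)
        = p.1 • (f n) - p.2 • (f n) := by
      show f (p.1 • n - p.2 • n) = _
      rw [map_sub, f.hom.map_smul, f.hom.map_smul]
    exact Submodule.subset_span ⟨p, hp, f n, this⟩))
  map_id _ := ModuleCat.hom_ext (Submodule.linearMap_qext _ (LinearMap.ext fun _ => rfl))
  map_comp _ _ := ModuleCat.hom_ext (Submodule.linearMap_qext _ (LinearMap.ext fun _ => rfl))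

instance : (coinvFunctor k S P).Additive where
  map_add := ModuleCat.hom_ext (Submodule.linearMap_qext _ (LinearMap.ext fun _ => rfl))

end Machinery

/-- Hochschild homology `HH_n(A, A)` of a `k`-algebra `A`: the `n`-th left derived functor
(that is, `Tor_n` over the enveloping algebra `A ⊗[k] Aᵐᵒᵖ`) of the coinvariants functor
`N ↦ N / span { a•n - n•a }` (which is naturally isomorphic to `A ⊗_{A ⊗[k] Aᵐᵒᵖ} -`),
evaluated at the `A`-bimodule `A` itself. -/
noncomputable def HochschildHomology (k : Type) [CommRing k] (A : Type) [Ring A] [Algebra k A]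
    (n : ℕ) : ModuleCat k :=
  letI : Module (A ⊗[k] Aᵐᵒᵖ) A := TensorProduct.Algebra.module
  ((coinvFunctor k (A ⊗[k] Aᵐᵒᵖ)
      {p | ∃ a : A, p = (a ⊗ₜ[k] (1 : Aᵐᵒᵖ), (1 : A) ⊗ₜ[k] op a)}).leftDerived n).obj
    (ModuleCat.of (A ⊗[k] Aᵐᵒᵖ) A)

/-- Group homology `H_n(G; k)` with trivial coefficients `k`: the `n`-th left derived functor
(that is, `Tor_n` over the group algebra `MonoidAlgebra k G`) of the coinvariants functor
`N ↦ N / span { g•n - n }`, evaluated at the trivial one-dimensional representation `k`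
(made a `MonoidAlgebra k G`-module via the augmentation map). -/
noncomputable def GroupHomology (k : Type) [CommRing k] (G : Type) [Group G] (n : ℕ) :
    ModuleCat k :=
  letI : Module (MonoidAlgebra k G) k :=
    Module.compHom k (MonoidAlgebra.lift k k G 1).toRingHom
  ((coinvFunctor k (MonoidAlgebra k G)
      {p | ∃ g : G, p = (MonoidAlgebra.single g 1, 1)}).leftDerived n).obj
    (ModuleCat.of (MonoidAlgebra k G) k)

/-!
Send a left `k[G]`-module `M` to the `k[G]`-bimodule `k[G] ⊗[k] M`, with `G` acting diagonally on
the left and by multiplication on the first factor on the right. This functor is exact, preserves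
projectives, and takes the trivial module `k` to the bimodule `k[G]`. Naturally in `M`, the
bimodule coinvariants of `k[G] ⊗[k] M` are the direct sum, over the conjugacy classes of `G`, of
the coinvariants of `M` under the centralizer of the chosen representative: if `g * x * g⁻¹` is the
representative of the class of `x`, then the class of `x ⊗ m` corresponds to the class of `g • m`.
Restriction to a subgroup is exact and preserves projectives as well, so the left derived functors
of both sides, evaluated at `k`, are Hochschild homology and the sum of the group homologies.
-/

/-! ### Left derived functors of composites and coproducts -/

section LeftDerived

open Limits

universe v₁ v₂ v₃ u₁ u₂ u₃

section Composite

variable {C : Type u₁} [Category.{v₁} C] [Abelian C] [HasProjectiveResolutions C]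
  {D : Type u₂} [Category.{v₂} D] [Abelian D] [HasProjectiveResolutions D]
  {E : Type u₃} [Category.{v₃} E] [Abelian E]

/-- An exact functor `F` that preserves projectives carries projective resolutions to projective
resolutions, so that `L_n (F ⋙ T) ≅ F ⋙ L_n T`, here evaluated at an object. -/
noncomputable def leftDerivedCompObjIso (F : C ⥤ D) [F.Additive]
    [F.PreservesProjectiveObjects] [F.PreservesHomology] (T : D ⥤ E) [T.Additive] (n : ℕ) (X : C) :
    ((F ⋙ T).leftDerived n).obj X ≅ (T.leftDerived n).obj (F.obj X) :=
  let P := projectiveResolution X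
  P.isoLeftDerivedObj (F ⋙ T) n ≪≫ ((F.mapProjectiveResolution P).isoLeftDerivedObj T n).symm

end Composite

section Coproduct

variable {J : Type*} {C : Type u₁} [Category.{v₁} C] {D : Type u₂} [Category.{v₂} D]
  [HasColimitsOfShape (Discrete J) D]

/-- A functor that is pointwise the coproduct of the `Φ j` is the composite of the functor
`X ↦ (Φ j X)_j` with `colim`. -/
noncomputable def flipCompColimIsoOfIsColimit {Φ : J → C ⥤ D} {T : C ⥤ D} (ι : ∀ j, Φ j ⟶ T)
    (hι : ∀ X, IsColimit (Cofan.mk (T.obj X) fun j => (ι j).app X)) :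
    (Discrete.functor Φ).flip ⋙ colim ≅ T :=
  have hT : IsColimit (Cofan.mk T ι) := evaluationJointlyReflectsColimits _ fun X =>
    (isColimitMapCoconeCofanMkEquiv ((evaluation C D).obj X) Φ ι).symm (hι X)
  (colimitIsoFlipCompColim _).symm ≪≫ (colimit.isColimit _).coconePointUniqueUpToIso hT

variable [Abelian C] [Abelian D]
  [(colim : (Discrete J ⥤ D) ⥤ D).PreservesHomology]

/-- If coproducts are exact, then homology commutes with a pointwise coproduct of functors. -/
noncomputable def homologyMapIsoCoproduct {Φ : J → C ⥤ D} [∀ j, (Φ j).Additive]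
    {T : C ⥤ D} [T.Additive] (ι : ∀ j, Φ j ⟶ T)
    (hι : ∀ X, IsColimit (Cofan.mk (T.obj X) fun j => (ι j).app X)) (S : ShortComplex C) :
    (S.map T).homology ≅ ∐ fun j => (S.map (Φ j)).homology :=
  let Ψ := (Discrete.functor Φ).flip
  have : Ψ.PreservesZeroMorphisms := ⟨fun X Y => by ext ⟨j⟩; exact (Φ j).map_zero X Y⟩
  ShortComplex.homologyMapIso (S.mapNatIso (flipCompColimIsoOfIsColimit ι hι).symm) ≪≫
    (S.map Ψ).mapHomologyIso colim ≪≫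
    HasColimit.isoOfNatIso (Discrete.natIso fun j =>
      ((S.map Ψ).mapHomologyIso ((evaluation (Discrete J) D).obj j)).symm)

/-- If coproducts are exact, then left derived functors commute with pointwise coproducts of
functors. -/
noncomputable def leftDerivedObjIsoCoproduct [HasProjectiveResolutions C]
    {Φ : J → C ⥤ D} [∀ j, (Φ j).Additive] {T : C ⥤ D} [T.Additive] (ι : ∀ j, Φ j ⟶ T)
    (hι : ∀ X, IsColimit (Cofan.mk (T.obj X) fun j => (ι j).app X)) (n : ℕ) (X : C) :
    (T.leftDerived n).obj X ≅ ∐ fun j => ((Φ j).leftDerived n).obj X :=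
  let P := projectiveResolution X
  P.isoLeftDerivedObj T n ≪≫ homologyMapIsoCoproduct ι hι (P.complex.sc n) ≪≫
    Sigma.mapIso fun j => (P.isoLeftDerivedObj (Φ j) n).symm

end Coproduct

end LeftDerived

section RestrictScalars

universe v u₁ u₂

variable {R : Type u₁} {S : Type u₂} [Ring R] [Ring S]

instance restrictScalars_preservesHomology (f : R →+* S) :
    (ModuleCat.restrictScalars.{v} f).PreservesHomology :=
  have : Limits.PreservesFiniteLimits (ModuleCat.restrictScalars.{v} f) :=
    ⟨fun _ _ _ => ⟨inferInstance⟩⟩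
  have : Limits.PreservesFiniteColimits (ModuleCat.restrictScalars.{v} f) :=
    ⟨fun _ _ _ => ⟨inferInstance⟩⟩
  Functor.preservesHomologyOfExact _

theorem coextendScalars_preservesEpimorphisms (f : R →+* S)
    [Module.Projective R ((ModuleCat.restrictScalars f).obj (.of S S))] :
    (ModuleCat.coextendScalars.{u₁, u₂, max v u₂} f).PreservesEpimorphisms where
  preserves p hp := by
    rw [ModuleCat.epi_iff_surjective] at hp ⊢
    intro y
    let e := ModuleCat.CoextendScalars.equiv f
    obtain ⟨h, hh⟩ := Module.projective_lifting_property p.hom (e _ y) hp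
    exact ⟨(e _).symm h, hh⟩

theorem restrictScalars_preservesProjectiveObjects (f : R →+* S)
    [Module.Projective R ((ModuleCat.restrictScalars f).obj (.of S S))] :
    (ModuleCat.restrictScalars.{max v u₂} f).PreservesProjectiveObjects :=
  have := coextendScalars_preservesEpimorphisms.{v} f
  Functor.preservesProjectiveObjects_of_adjunction_of_preservesEpimorphisms
    (ModuleCat.restrictCoextendScalarsAdj f)

end RestrictScalars

section Subgroup

open MonoidAlgebra

universe v u₁ u₂

variable (k : Type u₁) [Ring k] {G : Type u₂} [Group G]

/-- The inclusion `k[H] → k[G]` of the group algebra of a subgroup. -/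
noncomputable abbrev subgroupAlgebraMap (H : Subgroup G) : k[H] →+* k[G] :=
  mapDomainRingHom k H.subtype

/-- Restriction of `k[G]`-modules to a subgroup `H` of `G`. -/
noncomputable abbrev restrictSubgroup (H : Subgroup G) :
    ModuleCat.{v} k[G] ⥤ ModuleCat.{v} k[H] :=
  ModuleCat.restrictScalars (subgroupAlgebraMap k H)

/-- A right transversal of `H` in `G` is a basis of `k[G]` as a left `k[H]`-module. -/
noncomputable def subgroupAlgebraBasis (H : Subgroup G) {T : Set G}
    (hT : Subgroup.IsComplement H T) :
    Module.Basis T k[H] ((restrictSubgroup k H).obj (.of _ k[G])) :=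
  let e : k[G] ≃+ (T →₀ k[H]) :=
    coeffAddEquiv.trans <|
      (Finsupp.domCongr (hT.equiv.trans (Equiv.prodComm _ _))).trans <|
      Finsupp.curryAddEquiv.trans (Finsupp.mapRange.addEquiv coeffAddEquiv.symm)
  have e_single (g : G) (r : k) : e (.single g r) =
      .single (hT.equiv g).2 (.single (hT.equiv g).1 r) := by
    simp [e]
  .ofRepr
    { e with
      map_smul' := fun a (b : k[G]) => by
        change e (subgroupAlgebraMap k H a * b) = a • e b
        induction a using MonoidAlgebra.induction_linear with
        | zero => simp
        | add a a' ha ha' => simp only [map_add, add_mul, add_smul, ha, ha']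
        | single h r =>
          induction b using MonoidAlgebra.induction_linear with
          | zero => simp
          | add b b' hb hb' => simp only [map_add, mul_add, smul_add, hb, hb']
          | single g s => simp [single_mul_single, e_single, hT.equiv_mul_left] }

instance (H : Subgroup G) :
    Module.Projective k[H] ((restrictSubgroup k H).obj (.of _ k[G])) :=
  have ⟨_, hT, _⟩ := H.exists_isComplement_right 1
  .of_basis (subgroupAlgebraBasis k H hT)

instance (H : Subgroup G) :
    (restrictSubgroup.{max v u₁ u₂} k H).PreservesProjectiveObjects :=
  restrictScalars_preservesProjectiveObjects.{max v u₁ u₂} _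

end Subgroup

/-! ### The bimodule induced by a `k[G]`-module -/

section GroupAlgebra

open MonoidAlgebra

universe u v

section Induced

variable (k : Type u) [CommRing k] (G : Type v) [Group G]

/-- The ring homomorphism `g ↦ g ⊗ op g⁻¹`, along which a `k[G]`-bimodule becomes a left
`k[G]`-module by conjugation. -/
noncomputable def twistedDiagonal : k[G] →+* k[G] ⊗[k] k[G]ᵐᵒᵖ :=
  (MonoidAlgebra.lift k (k[G] ⊗[k] k[G]ᵐᵒᵖ) G
    { toFun g := single g 1 ⊗ₜ op (single g⁻¹ 1)
      map_one' := by simp [← one_def, Algebra.TensorProduct.one_def]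
      map_mul' g h := by simp [← op_mul, single_mul_single] }).toRingHom

variable {k G}

theorem twistedDiagonal_single (g : G) (r : k) :
    twistedDiagonal k G (single g r) = single g r ⊗ₜ op (single g⁻¹ 1) := by
  simp [twistedDiagonal, smul_tmul']

theorem one_tmul_op_mul_twistedDiagonal_single (g : G) (r : k) (a b : k[G]) :
    (1 ⊗ₜ op (single g 1 * a * b) : k[G] ⊗[k] k[G]ᵐᵒᵖ) * twistedDiagonal k G (single g r) =
      (single g r ⊗ₜ op b) * (1 ⊗ₜ op a) := by
  simp [twistedDiagonal_single, ← op_mul, ← mul_assoc, single_mul_single, ← one_def]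

variable (M : Type*) [AddCommGroup M] [Module k M]

variable (k G) in
/-- The right action of `k[G]` on `k[G] ⊗[k] M` by multiplication on the first factor, encoded as
an algebra homomorphism out of `k[G]ᵐᵒᵖ`. -/
noncomputable def rightAction : k[G]ᵐᵒᵖ →ₐ[k] Module.End k (k[G] ⊗[k] M) :=
  (Module.End.rTensorAlgHom k k[G] M).comp (Algebra.lsmul k k k[G])

variable {M} in
theorem rightAction_op_tmul (b a : k[G]) (m : M) :
    rightAction k G M (op b) (a ⊗ₜ m) = (a * b) ⊗ₜ m :=
  rfl

variable [Module k[G] M] [IsScalarTower k k[G] M]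

variable (k G) in
/-- The left action of `k[G]` on `k[G] ⊗[k] M` extending the diagonal action
`g • (a ⊗ m) = g a ⊗ g m` of `G`. -/
noncomputable def diagonalAction : k[G] →ₐ[k] Module.End k (k[G] ⊗[k] M) :=
  MonoidAlgebra.lift k _ G
    { toFun g := TensorProduct.map (Algebra.lsmul k k k[G] (single g 1 : k[G]))
        (Algebra.lsmul k k M (single g 1 : k[G]))
      map_one' := by ext; simp [← one_def]
      map_mul' g h := by ext; simp [smul_smul, single_mul_single, mul_assoc] }

variable {M}

theorem diagonalAction_single_tmul (g : G) (r : k) (a : k[G]) (m : M) :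
    diagonalAction k G M (single g r) (a ⊗ₜ m) =
      (single g 1 * a) ⊗ₜ ((single g r : k[G]) • m) := by
  have : (single g r : k[G]) = r • single g 1 := by simp
  rw [this, smul_assoc]
  simp [diagonalAction]

theorem commute_diagonalAction_rightAction (a : k[G]) (b : k[G]ᵐᵒᵖ) :
    Commute (diagonalAction k G M a) (rightAction k G M b) := by
  obtain ⟨b, rfl⟩ := op_surjective b
  induction a using MonoidAlgebra.induction_linear with
  | zero => simp
  | add a a' ha ha' => simpa using ha.add_left ha'
  | single g r =>
    refine TensorProduct.ext' fun x m => ?_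
    simp [diagonalAction_single_tmul, rightAction_op_tmul, mul_assoc]

/-- The bimodule structure on `k[G] ⊗[k] M` given by `diagonalAction` and `rightAction`. It is not a
global instance: for `M = k[G]ᵐᵒᵖ` it competes with multiplication in the enveloping algebra. -/
noncomputable abbrev inducedModule : Module (k[G] ⊗[k] k[G]ᵐᵒᵖ) (k[G] ⊗[k] M) :=
  .compHom _ (Algebra.TensorProduct.lift (diagonalAction k G M) (rightAction k G M)
    commute_diagonalAction_rightAction).toRingHom

attribute [local instance] inducedModule

instance : IsScalarTower k (k[G] ⊗[k] k[G]ᵐᵒᵖ) (k[G] ⊗[k] M) where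
  smul_assoc r e z := by
    change Algebra.TensorProduct.lift (diagonalAction k G M) (rightAction k G M)
      commute_diagonalAction_rightAction (r • e) z = _
    rw [map_smul]
    rfl

theorem single_tmul_op_smul_tmul (g : G) (r : k) (a b : k[G]) (m : M) :
    (single g r ⊗ₜ op b : k[G] ⊗[k] k[G]ᵐᵒᵖ) • (a ⊗ₜ[k] m) =
      (single g 1 * a * b) ⊗ₜ[k] ((single g r : k[G]) • m) := by
  change Algebra.TensorProduct.lift (diagonalAction k G M) (rightAction k G M)
    commute_diagonalAction_rightAction _ _ = _
  rw [Algebra.TensorProduct.lift_tmul, Module.End.mul_apply, rightAction_op_tmul,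
    diagonalAction_single_tmul, mul_assoc]

theorem one_tmul_op_smul_tmul (a b : k[G]) (m : M) :
    (1 ⊗ₜ op b : k[G] ⊗[k] k[G]ᵐᵒᵖ) • (a ⊗ₜ[k] m) = (a * b) ⊗ₜ[k] m := by
  simpa only [← one_def, one_mul, one_smul] using single_tmul_op_smul_tmul 1 1 a b m

theorem twistedDiagonal_smul_one_tmul (a : k[G]) (m : M) :
    twistedDiagonal k G a • ((1 : k[G]) ⊗ₜ[k] m) = (1 : k[G]) ⊗ₜ[k] (a • m) := by
  induction a using MonoidAlgebra.induction_linear with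
  | zero => rw [map_zero, zero_smul (k[G] ⊗[k] k[G]ᵐᵒᵖ) ((1 : k[G]) ⊗ₜ[k] m), zero_smul, tmul_zero]
  | add a b ha hb => rw [map_add, add_smul, add_smul, ha, hb, tmul_add]
  | single g r =>
    rw [twistedDiagonal_single, single_tmul_op_smul_tmul, mul_one, single_mul_single,
      mul_inv_cancel, mul_one, ← one_def]

variable (k G M) in
/-- The map `m ↦ 1 ⊗ m`, which exhibits `k[G] ⊗[k] M` as the extension of scalars of `M` along
`twistedDiagonal`. -/
noncomputable def inducedUnit : M →ₛₗ[twistedDiagonal k G] k[G] ⊗[k] M where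
  toFun m := 1 ⊗ₜ m
  map_add' := tmul_add 1
  map_smul' a m := (twistedDiagonal_smul_one_tmul a m).symm

section Lift

variable {N : Type*} [AddCommGroup N] [Module (k[G] ⊗[k] k[G]ᵐᵒᵖ) N]

theorem inducedHom_ext {f f' : k[G] ⊗[k] M →ₗ[k[G] ⊗[k] k[G]ᵐᵒᵖ] N}
    (h : ∀ m : M, f (1 ⊗ₜ m) = f' (1 ⊗ₜ m)) : f = f' := by
  ext z
  induction z with
  | zero => simp
  | add x y hx hy => simp [hx, hy]
  | tmul a m =>
    rw [← one_mul a, ← one_tmul_op_smul_tmul, map_smul, map_smul, h]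

variable (φ : M →ₛₗ[twistedDiagonal k G] N)

/-- The additive map underlying `inducedLift`. -/
noncomputable def inducedLiftAux : k[G] ⊗[k] M →+ N :=
  let ψ : k[G] →+ N →+ N := (smulAddHom (k[G] ⊗[k] k[G]ᵐᵒᵖ) N).comp <|
    (Algebra.TensorProduct.includeRight : k[G]ᵐᵒᵖ →ₐ[k] k[G] ⊗[k] k[G]ᵐᵒᵖ).toAddMonoidHom.comp
      opAddEquiv.toAddMonoidHom
  TensorProduct.liftAddHom ((AddMonoidHom.compHom.flip φ.toAddMonoidHom).comp ψ) fun r a m => by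
    change (1 ⊗ₜ op (r • a) : k[G] ⊗[k] k[G]ᵐᵒᵖ) • φ m = (1 ⊗ₜ op a : k[G] ⊗[k] k[G]ᵐᵒᵖ) • φ (r • m)
    rw [← algebraMap_smul k[G] r m, φ.map_smulₛₗ, smul_smul, op_smul, ← smul_tmul,
      ← Algebra.algebraMap_eq_smul_one]
    simp [twistedDiagonal_single, ← one_def]

theorem inducedLiftAux_tmul (a : k[G]) (m : M) :
    inducedLiftAux φ (a ⊗ₜ m) = (1 ⊗ₜ op a : k[G] ⊗[k] k[G]ᵐᵒᵖ) • φ m :=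
  rfl

theorem inducedLiftAux_smul (e : k[G] ⊗[k] k[G]ᵐᵒᵖ) (z : k[G] ⊗[k] M) :
    inducedLiftAux φ (e • z) = e • inducedLiftAux φ z := by
  induction z with
  | zero => simp
  | add x y hx hy => simp only [smul_add, map_add, hx, hy]
  | tmul a m =>
    induction e with
    | zero =>
      simp only [map_zero, zero_smul (k[G] ⊗[k] k[G]ᵐᵒᵖ) (_ : k[G] ⊗[k] M),
        zero_smul (k[G] ⊗[k] k[G]ᵐᵒᵖ) (_ : N)]
    | add x y hx hy => simp only [add_smul, map_add, hx, hy]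
    | tmul c b =>
      induction c using MonoidAlgebra.induction_linear with
      | zero =>
        simp only [zero_tmul, map_zero, zero_smul (k[G] ⊗[k] k[G]ᵐᵒᵖ) (_ : k[G] ⊗[k] M),
          zero_smul (k[G] ⊗[k] k[G]ᵐᵒᵖ) (_ : N)]
      | add c c' hc hc' => simp only [add_tmul, add_smul, map_add, hc, hc']
      | single g r =>
        rw [← op_unop b, single_tmul_op_smul_tmul, inducedLiftAux_tmul, inducedLiftAux_tmul,
          φ.map_smulₛₗ, smul_smul, smul_smul,
          one_tmul_op_mul_twistedDiagonal_single]

/-- The bimodule homomorphism `a ⊗ m ↦ φ m * a` determined by a semilinear map `φ`: the universal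
property of `k[G] ⊗[k] M`. -/
noncomputable def inducedLift : k[G] ⊗[k] M →ₗ[k[G] ⊗[k] k[G]ᵐᵒᵖ] N where
  __ := inducedLiftAux φ
  map_smul' := inducedLiftAux_smul φ

theorem inducedLift_tmul (a : k[G]) (m : M) :
    inducedLift φ (a ⊗ₜ m) = (1 ⊗ₜ op a : k[G] ⊗[k] k[G]ᵐᵒᵖ) • φ m :=
  rfl

theorem inducedLift_one_tmul (m : M) : inducedLift φ (1 ⊗ₜ m) = φ m :=
  one_smul _ (φ m)

end Lift

section Map

variable {N : Type*} [AddCommGroup N] [Module k N] [Module k[G] N] [IsScalarTower k k[G] N]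

/-- Functoriality of the bimodule `k[G] ⊗[k] M` in the `k[G]`-module `M`. -/
noncomputable def inducedMap (f : M →ₗ[k[G]] N) :
    k[G] ⊗[k] M →ₗ[k[G] ⊗[k] k[G]ᵐᵒᵖ] k[G] ⊗[k] N :=
  inducedLift ((inducedUnit k G N).comp f)

theorem inducedMap_tmul (f : M →ₗ[k[G]] N) (a : k[G]) (m : M) :
    inducedMap f (a ⊗ₜ m) = a ⊗ₜ f m := by
  rw [inducedMap, inducedLift_tmul]
  exact (one_tmul_op_smul_tmul 1 a (f m)).trans (by rw [one_mul])

/-- The isomorphism of bimodules induced by an isomorphism of `k[G]`-modules. -/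
noncomputable def inducedCongr (f : M ≃ₗ[k[G]] N) :
    k[G] ⊗[k] M ≃ₗ[k[G] ⊗[k] k[G]ᵐᵒᵖ] k[G] ⊗[k] N :=
  .ofLinearMap (inducedMap f) (inducedMap f.symm)
    (inducedHom_ext fun m => by simp [inducedMap_tmul])
    (inducedHom_ext fun m => by simp [inducedMap_tmul])

theorem coe_inducedMap (f : M →ₗ[k[G]] N) :
    ⇑(inducedMap f) = (f.restrictScalars k).lTensor k[G] := by
  funext z
  induction z with
  | zero => simp
  | add x y hx hy => simp [hx, hy]
  | tmul a m => simp [inducedMap_tmul]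

theorem exact_inducedMap {L : Type*} [AddCommGroup L] [Module k L] [Module k[G] L]
    [IsScalarTower k k[G] L] {f : M →ₗ[k[G]] N} {g : N →ₗ[k[G]] L}
    (h : Function.Exact f g) : Function.Exact (inducedMap f) (inducedMap g) := by
  rw [coe_inducedMap, coe_inducedMap]
  exact Module.Flat.lTensor_exact k[G] h

end Map

end Induced

attribute [local instance] inducedModule

noncomputable local instance {k : Type u} [CommRing k] {G : Type v} [Group G]
    (M : ModuleCat k[G]) : Module k M :=
  Module.restrictScalars k k[G] M

local instance {k : Type u} [CommRing k] {G : Type v} [Group G] (M : ModuleCat k[G]) :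
    IsScalarTower k k[G] M :=
  IsScalarTower.restrictScalars k k[G] M

section Functor

variable (k : Type u) [CommRing k] (G : Type u) [Group G]

/-- The functor `M ↦ k[G] ⊗[k] M` from left `k[G]`-modules to bimodules; the latter are encoded as
left modules over the enveloping algebra. -/
noncomputable def inducedBimodule : ModuleCat.{u} k[G] ⥤ ModuleCat.{u} (k[G] ⊗[k] k[G]ᵐᵒᵖ) where
  obj M := .of _ (k[G] ⊗[k] M)
  map f := ModuleCat.ofHom <| inducedMap f.hom
  map_id M := ModuleCat.hom_ext <| inducedHom_ext fun m => inducedMap_tmul _ _ _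
  map_comp f g := ModuleCat.hom_ext <| inducedHom_ext fun m => by
    simp [inducedMap_tmul]

/-- `inducedBimodule` is left adjoint to restriction along `twistedDiagonal`: it is extension of
scalars along that map. -/
noncomputable def inducedBimoduleAdjunction :
    inducedBimodule k G ⊣ ModuleCat.restrictScalars (twistedDiagonal k G) :=
  Adjunction.mkOfHomEquiv
    { homEquiv M N :=
        { toFun f := ModuleCat.semilinearMapAddEquiv _ M N <| f.hom.comp (inducedUnit k G M)
          invFun φ := ModuleCat.ofHom <| inducedLift <|
            (ModuleCat.semilinearMapAddEquiv _ M N).symm φ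
          left_inv f := ModuleCat.hom_ext <| inducedHom_ext fun m => inducedLift_one_tmul _ m
          right_inv φ := by ext m; exact inducedLift_one_tmul _ m }
      homEquiv_naturality_left_symm {L M N} f φ :=
        ModuleCat.hom_ext <| inducedHom_ext (N := N) fun m => by
          let φ' := (ModuleCat.semilinearMapAddEquiv _ M N).symm φ
          change inducedLift (φ'.comp f.hom) (1 ⊗ₜ[k] m) =
            inducedLift φ' (inducedMap f.hom (1 ⊗ₜ[k] m))
          rw [inducedMap_tmul, inducedLift_one_tmul, inducedLift_one_tmul]
          rfl
      homEquiv_naturality_right f φ := rfl }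

instance : (inducedBimodule k G).PreservesProjectiveObjects :=
  Functor.preservesProjectiveObjects_of_adjunction_of_preservesEpimorphisms
    (inducedBimoduleAdjunction k G)

instance : (inducedBimodule k G).Additive := (inducedBimoduleAdjunction k G).left_adjoint_additive

instance : (inducedBimodule k G).PreservesHomology :=
  ((inducedBimodule k G).exact_tfae.out 1 2).1 fun S hS => by
    rw [ShortComplex.ShortExact.moduleCat_exact_iff_function_exact] at hS ⊢
    exact exact_inducedMap hS

end Functor

section Trivial

variable (k : Type u) [CommRing k] (G : Type v) [Group G]

/-- The trivial `k[G]`-module `k`. -/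
noncomputable abbrev augmentationModule : Module k[G] k :=
  Module.compHom k (MonoidAlgebra.lift k k G 1).toRingHom

attribute [local instance] augmentationModule

variable {k G} in
theorem single_smul_trivial (g : G) (r s : k) : (single g r : k[G]) • s = r * s := by
  change MonoidAlgebra.lift k k G 1 (single g r) * s = _
  simp

instance : IsScalarTower k k[G] k where
  smul_assoc r a s := by
    change MonoidAlgebra.lift k k G 1 (r • a) * s = r * (MonoidAlgebra.lift k k G 1 a * s)
    rw [map_smul, smul_eq_mul, mul_assoc]

/-- The ring `k[G]` as a bimodule over itself. -/
noncomputable abbrev selfBimodule : Module (k[G] ⊗[k] k[G]ᵐᵒᵖ) k[G] := TensorProduct.Algebra.module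

attribute [local instance] selfBimodule

/-- The inclusion of the constants `k → k[G]`, equivariant for the conjugation action on `k[G]`. -/
noncomputable def constantsHom : k →ₛₗ[twistedDiagonal k G] k[G] where
  __ := singleAddHom (R := k) (1 : G)
  map_smul' a s := by
    induction a using MonoidAlgebra.induction_linear with
    | zero => simp [zero_smul (k[G] ⊗[k] k[G]ᵐᵒᵖ) (_ : k[G])]
    | add a b ha hb => simp_all [add_smul]
    | single g r =>
      rw [single_smul_trivial, twistedDiagonal_single, TensorProduct.Algebra.smul_def]
      simp [single_mul_single]

theorem coe_inducedLift_constantsHom :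
    ⇑(inducedLift (constantsHom k G)) = TensorProduct.rid k k[G] := by
  funext z
  induction z with
  | zero => simp
  | add x y hx hy => simp only [map_add, hx, hy]
  | tmul a r =>
    rw [inducedLift_tmul, TensorProduct.Algebra.smul_def]
    suffices single 1 r * a = r • a by simpa [constantsHom]
    exact (Algebra.smul_def r a).symm

/-- The bimodule induced by the trivial module is `k[G]`. -/
noncomputable def inducedTrivialEquiv : k[G] ⊗[k] k ≃ₗ[k[G] ⊗[k] k[G]ᵐᵒᵖ] k[G] :=
  .ofBijective (inducedLift (constantsHom k G)) <| by
    rw [coe_inducedLift_constantsHom]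
    exact (TensorProduct.rid k k[G]).bijective

end Trivial

attribute [local instance] augmentationModule

section TrivialIso

attribute [local instance] selfBimodule

variable (k : Type u) [CommRing k] (G : Type u) [Group G]

/-- `inducedTrivialEquiv` in `ModuleCat`. The `k`-module structure on the object `.of k[G] k` is
restricted from `k[G]` and is not reducibly that of `k`; passing through an arbitrary `M ≃ₗ[k[G]] k`
keeps the two apart. -/
noncomputable def inducedBimoduleTrivialIso :
    (inducedBimodule k G).obj (.of k[G] k) ≅ .of (k[G] ⊗[k] k[G]ᵐᵒᵖ) k[G] :=
  let e (M : ModuleCat.{u} k[G]) (f : M ≃ₗ[k[G]] k) :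
      (inducedBimodule k G).obj M ≅ .of (k[G] ⊗[k] k[G]ᵐᵒᵖ) k[G] :=
    (inducedCongr f ≪≫ₗ inducedTrivialEquiv k G).toModuleIso
  e _ (.refl ..)

end TrivialIso

section RestrictTrivial

variable (k : Type u) [CommRing k] {G : Type v} [Group G]

variable {k} in
theorem subgroupAlgebraMap_smul_trivial {H : Subgroup G} (a : k[H]) (s : k) :
    subgroupAlgebraMap k H a • s = a • s := by
  induction a using MonoidAlgebra.induction_linear with
  | zero => simp
  | add a b ha hb => rw [map_add, add_smul, add_smul, ha, hb]
  | single h r =>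
    rw [mapDomainRingHom_apply, mapDomain_single, single_smul_trivial, single_smul_trivial]

/-- The trivial module restricts to the trivial module. -/
noncomputable def restrictSubgroupTrivialIso (H : Subgroup G) :
    (restrictSubgroup k H).obj (.of k[G] k) ≅ .of k[H] k :=
  let e : (restrictSubgroup k H).obj (.of k[G] k) ≃ₗ[k[H]] (ModuleCat.of k[H] k) :=
    { AddEquiv.refl k with map_smul' := subgroupAlgebraMap_smul_trivial }
  e.toModuleIso

end RestrictTrivial

/-! ### Coinvariants -/

section Coinvariants

variable (k : Type) [CommRing k] {S : Type} [Ring S] [Algebra k S] (P : Set (S × S))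
  (N : ModuleCat.{0} S) [Module k N] [IsScalarTower k S N]

/-- The quotient map onto the coinvariants. The value of `coinvFunctor` is a quotient of `N` with
the `k`-module structure restricted from `S`; here `N` carries any compatible one. -/
noncomputable def coinvMk : N →ₗ[k] (coinvFunctor k S P).obj N where
  __ := (relSub k S P N).mkQ.toAddMonoidHom
  map_smul' r n := congrArg (relSub k S P N).mkQ (algebraMap_smul S r n).symm

variable {k P N}

theorem coinvMk_surjective : Function.Surjective (coinvMk k P N) :=
  (relSub k S P N).mkQ_surjective

theorem coinvMk_smul_eq {s t : S} (hst : (s, t) ∈ P) (n : N) :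
    coinvMk k P N (s • n) = coinvMk k P N (t • n) :=
  (Submodule.Quotient.eq _).2 (Submodule.subset_span ⟨_, hst, n, rfl⟩)

variable {B : Type} [AddCommGroup B] [Module k B]

/-- The universal property of the coinvariants. -/
noncomputable def coinvLift (f : N →ₗ[k] B) (hf : ∀ s t, (s, t) ∈ P → ∀ n, f (s • n) = f (t • n)) :
    (coinvFunctor k S P).obj N →ₗ[k] B :=
  let f' : (ModuleCat.restrictScalars (algebraMap k S)).obj N →ₗ[k] B :=
    { toFun := f
      map_add' := f.map_add
      map_smul' r (n : N) := (congrArg f (algebraMap_smul S r n)).trans (f.map_smul r n) }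
  (relSub k S P N).liftQ f' <| Submodule.span_le.2 <| by
    rintro _ ⟨p, hp, n, rfl⟩
    exact (f.map_sub _ _).trans (sub_eq_zero.2 (hf _ _ hp n))

theorem coinvLift_mk (f : N →ₗ[k] B) (hf : ∀ s t, (s, t) ∈ P → ∀ n, f (s • n) = f (t • n)) (n : N) :
    coinvLift f hf (coinvMk k P N n) = f n :=
  rfl

theorem coinvFunctor_map_mk {N' : ModuleCat.{0} S} [Module k N'] [IsScalarTower k S N']
    (f : N ⟶ N') (n : N) :
    ((coinvFunctor k S P).map f).hom (coinvMk k P N n) = coinvMk k P N' (f.hom n) :=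
  rfl

end Coinvariants

section GroupCoinvariants

variable (k : Type) [CommRing k] (G : Type) [Group G]

/-- The `G`-coinvariants functor, whose left derived functors define `GroupHomology`. -/
noncomputable abbrev groupCoinvariants : ModuleCat.{0} k[G] ⥤ ModuleCat.{0} k :=
  coinvFunctor k k[G] {p | ∃ g : G, p = (single g 1, 1)}

/-- The functor `N ↦ N / ⟨a • n - n • a⟩` on `A`-bimodules, whose left derived functors define
`HochschildHomology`. -/
noncomputable abbrev bimoduleCoinvariants (A : Type) [Ring A] [Algebra k A] :
    ModuleCat.{0} (A ⊗[k] Aᵐᵒᵖ) ⥤ ModuleCat.{0} k :=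
  coinvFunctor k (A ⊗[k] Aᵐᵒᵖ)
    {p | ∃ a : A, p = (a ⊗ₜ[k] (1 : Aᵐᵒᵖ), (1 : A) ⊗ₜ[k] op a)}

variable {k G} {N : ModuleCat.{0} k[G]}

variable (N) in
/-- The quotient map onto the `G`-coinvariants. -/
noncomputable abbrev groupCoinvMk : N →ₗ[k] (groupCoinvariants k G).obj N := coinvMk k _ N

theorem groupCoinvMk_single_smul (g : G) (n : N) :
    groupCoinvMk N ((single g 1 : k[G]) • n) = groupCoinvMk N n :=
  (coinvMk_smul_eq (P := {p : k[G] × k[G] | ∃ g : G, p = (single g 1, 1)}) ⟨g, rfl⟩ n).trans <| by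
    rw [one_smul]

variable {B : Type} [AddCommGroup B] [Module k B]

/-- The universal property of the `G`-coinvariants. -/
noncomputable def groupCoinvLift (f : N →ₗ[k] B)
    (hf : ∀ g n, f ((single g 1 : k[G]) • n) = f n) :
    (groupCoinvariants k G).obj N →ₗ[k] B :=
  coinvLift f <| by
    rintro _ _ ⟨g, ⟨⟩⟩ n
    rw [one_smul, hf]

theorem groupCoinvLift_mk (f : N →ₗ[k] B) (hf : ∀ g n, f ((single g 1 : k[G]) • n) = f n) (n : N) :
    groupCoinvLift f hf (groupCoinvMk N n) = f n :=
  coinvLift_mk _ _ n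

end GroupCoinvariants

section SubgroupCoinvariants

variable (k : Type) [CommRing k] {G : Type} [Group G] (H : Subgroup G)

/-- The functor sending a `k[G]`-module to its `H`-coinvariants. -/
noncomputable abbrev subgroupCoinvariants : ModuleCat.{0} k[G] ⥤ ModuleCat.{0} k :=
  restrictSubgroup k H ⋙ groupCoinvariants k H

variable {k} (M : ModuleCat.{0} k[G])

variable {H} in
theorem single_smul_restrictSubgroup (h : H) (r : k) (m : (restrictSubgroup k H).obj M) :
    (single h r : k[H]) • m = (single (h : G) r : k[G]) • (show M from m) :=
  congrArg (fun a : k[G] => a • (show M from m)) (mapDomain_single ..)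

/-- The identity of `M`. The two sides carry `k`-module structures restricted from `k[G]` and from
`k[H]`, which agree only propositionally. -/
noncomputable def toRestrictSubgroup : M ≃ₗ[k] (restrictSubgroup k H).obj M where
  __ := AddEquiv.refl M
  map_smul' r m := (single_smul_restrictSubgroup M 1 r m).symm

/-- The quotient map onto the `H`-coinvariants of a `k[G]`-module. -/
noncomputable def subgroupCoinvMk : M →ₗ[k] (subgroupCoinvariants k H).obj M :=
  coinvMk k _ ((restrictSubgroup k H).obj M) ∘ₗ toRestrictSubgroup H M

variable {H M}

theorem single_smul_toRestrictSubgroup (h : H) (m : M) :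
    (single h 1 : k[H]) • toRestrictSubgroup H M m =
      toRestrictSubgroup H M ((single (h : G) 1 : k[G]) • m) :=
  single_smul_restrictSubgroup M h 1 m

theorem subgroupCoinvMk_surjective : Function.Surjective (subgroupCoinvMk H M) :=
  (coinvMk_surjective (k := k) (N := (restrictSubgroup k H).obj M)).comp
    (toRestrictSubgroup H M).surjective

theorem subgroupCoinvMk_single_smul {g : G} (hg : g ∈ H) (m : M) :
    subgroupCoinvMk H M ((single g 1 : k[G]) • m) = subgroupCoinvMk H M m := by
  have h := groupCoinvMk_single_smul (N := (restrictSubgroup k H).obj M) ⟨g, hg⟩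
    (toRestrictSubgroup H M m)
  rw [single_smul_toRestrictSubgroup] at h
  exact h

variable {B : Type} [AddCommGroup B] [Module k B]

/-- The universal property of the `H`-coinvariants of a `k[G]`-module. -/
noncomputable def subgroupCoinvLift (f : M →ₗ[k] B)
    (hf : ∀ g ∈ H, ∀ m, f ((single g 1 : k[G]) • m) = f m) :
    (subgroupCoinvariants k H).obj M →ₗ[k] B :=
  groupCoinvLift (f ∘ₗ (toRestrictSubgroup H M).symm.toLinearMap) <| by
    intro g n
    obtain ⟨m, rfl⟩ := (toRestrictSubgroup H M).surjective n
    rw [single_smul_toRestrictSubgroup]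
    exact hf g g.2 m

theorem subgroupCoinvLift_mk (f : M →ₗ[k] B)
    (hf : ∀ g ∈ H, ∀ m, f ((single g 1 : k[G]) • m) = f m) (m : M) :
    subgroupCoinvLift f hf (subgroupCoinvMk H M m) = f m :=
  groupCoinvLift_mk (N := (restrictSubgroup k H).obj M) _ _ (toRestrictSubgroup H M m)

theorem subgroupCoinvariants_map_mk {M' : ModuleCat.{0} k[G]} (f : M ⟶ M') (m : M) :
    ((subgroupCoinvariants k H).map f).hom (subgroupCoinvMk H M m) =
      subgroupCoinvMk H M' (f.hom m) :=
  coinvFunctor_map_mk (k := k) (N := (restrictSubgroup k H).obj M)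
    (N' := (restrictSubgroup k H).obj M') ((restrictSubgroup k H).map f) (toRestrictSubgroup H M m)

end SubgroupCoinvariants

section InducedCoinvariants

variable {k : Type} [CommRing k] {G : Type} [Group G] {M : ModuleCat.{0} k[G]}

variable (k G) in
/-- The functor sending `M` to the bimodule coinvariants of `k[G] ⊗[k] M`. -/
noncomputable abbrev inducedCoinvariants : ModuleCat.{0} k[G] ⥤ ModuleCat.{0} k :=
  inducedBimodule k G ⋙ bimoduleCoinvariants k k[G]

variable (M) in
/-- The map sending `m` to the class of `x ⊗ m`. -/
noncomputable def inducedCoinvMk (x : G) : M →ₗ[k] (inducedCoinvariants k G).obj M :=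
  coinvMk k _ (.of _ (k[G] ⊗[k] M)) ∘ₗ TensorProduct.mk k k[G] M (single x 1)

theorem inducedCoinvMk_conj (g x : G) (m : M) :
    inducedCoinvMk M (g * x * g⁻¹) ((single g 1 : k[G]) • m) = inducedCoinvMk M x m := by
  have h := coinvMk_smul_eq (k := k) (N := .of (k[G] ⊗[k] k[G]ᵐᵒᵖ) (k[G] ⊗[k] M))
    (P := {p | ∃ a : k[G], p = (a ⊗ₜ[k] (1 : k[G]ᵐᵒᵖ), (1 : k[G]) ⊗ₜ[k] op a)})
    ⟨single g 1, rfl⟩ (single (x * g⁻¹) 1 ⊗ₜ[k] m)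
  rw [← op_one, single_tmul_op_smul_tmul, one_tmul_op_smul_tmul] at h
  simp only [single_mul_single, mul_one, ← mul_assoc, inv_mul_cancel_right] at h
  exact h

theorem inducedCoinvariants_map_mk {M' : ModuleCat.{0} k[G]} (f : M ⟶ M') (x : G) (m : M) :
    ((inducedCoinvariants k G).map f).hom (inducedCoinvMk M x m) =
      inducedCoinvMk M' x (f.hom m) :=
  (coinvFunctor_map_mk (k := k) (N := .of _ (k[G] ⊗[k] M)) (N' := .of _ (k[G] ⊗[k] M'))
    ((inducedBimodule k G).map f) (single x 1 ⊗ₜ[k] m)).trans <|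
    congrArg (coinvMk k _ (.of _ (k[G] ⊗[k] M'))) (inducedMap_tmul f.hom _ m)

variable {B : Type} [AddCommGroup B] [Module k B]

theorem inducedCoinv_hom_ext {f f' : (inducedCoinvariants k G).obj M →ₗ[k] B}
    (h : ∀ x m, f (inducedCoinvMk M x m) = f' (inducedCoinvMk M x m)) : f = f' := by
  have h' : f ∘ₗ coinvMk k _ (.of _ (k[G] ⊗[k] M)) =
      f' ∘ₗ coinvMk k _ (.of _ (k[G] ⊗[k] M)) :=
    TensorProduct.ext <| MonoidAlgebra.lhom_ext' fun x => LinearMap.ext_ring <|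
      LinearMap.ext fun m => h x m
  ext z
  obtain ⟨z, rfl⟩ := coinvMk_surjective (k := k) (N := .of _ (k[G] ⊗[k] M)) z
  exact LinearMap.congr_fun h' z

section Lift

variable (F : G → M →ₗ[k] B)

/-- The linear map `x ⊗ m ↦ F x m` underlying `inducedCoinvLift`. -/
noncomputable def inducedCoinvLiftAux : k[G] ⊗[k] M →ₗ[k] B :=
  TensorProduct.lift (Finsupp.linearCombination k F ∘ₗ (coeffLinearEquiv k).toLinearMap)

theorem inducedCoinvLiftAux_single_tmul (x : G) (r : k) (m : M) :
    inducedCoinvLiftAux F (single x r ⊗ₜ m) = r • F x m := by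
  simp [inducedCoinvLiftAux]

variable {F}

theorem inducedCoinvLiftAux_smul
    (hF : ∀ g x m, F (g * x * g⁻¹) ((single g 1 : k[G]) • m) = F x m)
    (a : k[G]) (z : k[G] ⊗[k] M) :
    inducedCoinvLiftAux F ((a ⊗ₜ op 1 : k[G] ⊗[k] k[G]ᵐᵒᵖ) • z) =
      inducedCoinvLiftAux F ((1 ⊗ₜ op a : k[G] ⊗[k] k[G]ᵐᵒᵖ) • z) := by
  induction z with
  | zero => simp
  | add z z' hz hz' => simp only [smul_add, map_add, hz, hz']
  | tmul b m =>
    induction b using MonoidAlgebra.induction_linear with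
    | zero => simp
    | add b b' hb hb' => simp only [add_tmul, smul_add, map_add, hb, hb']
    | single x s =>
      induction a using MonoidAlgebra.induction_linear with
      | zero => simp [zero_smul (k[G] ⊗[k] k[G]ᵐᵒᵖ) (_ : k[G] ⊗[k] M)]
      | add a a' ha ha' =>
        simp only [add_tmul, MulOpposite.op_add, tmul_add, add_smul, map_add, ha, ha']
      | single g r =>
        have h : F (g * x) ((single g 1 : k[G]) • m) = F (x * g) m := by
          simpa [mul_assoc] using hF g (x * g) m
        have hr : (single g r : k[G]) • m = r • (single g 1 : k[G]) • m := by
          rw [← smul_assoc, smul_single', mul_one]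
        rw [single_tmul_op_smul_tmul, one_tmul_op_smul_tmul, mul_one, single_mul_single,
          single_mul_single, inducedCoinvLiftAux_single_tmul, inducedCoinvLiftAux_single_tmul, hr,
          map_smul, h, one_mul, mul_smul]

variable (hF : ∀ g x m, F (g * x * g⁻¹) ((single g 1 : k[G]) • m) = F x m)

/-- The universal property of the bimodule coinvariants of `k[G] ⊗[k] M`: linear maps out of them
are conjugation-invariant families of linear maps out of `M`, indexed by `G`. -/
noncomputable def inducedCoinvLift : (inducedCoinvariants k G).obj M →ₗ[k] B :=
  coinvLift (N := .of _ (k[G] ⊗[k] M)) (inducedCoinvLiftAux F) <| by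
    rintro _ _ ⟨a, ⟨⟩⟩ z
    exact inducedCoinvLiftAux_smul hF a z

theorem inducedCoinvLift_mk (x : G) (m : M) :
    inducedCoinvLift hF (inducedCoinvMk M x m) = F x m :=
  (coinvLift_mk (N := .of _ (k[G] ⊗[k] M)) _ _ (single x 1 ⊗ₜ[k] m)).trans <|
    (inducedCoinvLiftAux_single_tmul F x 1 m).trans (one_smul k _)

end Lift

end InducedCoinvariants

/-! ### Decomposition over conjugacy classes -/

section Centralizer

open Limits

variable {k : Type} [CommRing k] {G : Type} [Group G]

/-- The map `M_{C_G(x)} → (k[G] ⊗ M)_{k[G]-bimod}` on coinvariants sending the class of `m` to the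
class of `x ⊗ m`. -/
noncomputable def centralizerCoinvHom (x : G) (M : ModuleCat.{0} k[G]) :
    (subgroupCoinvariants k (Subgroup.centralizer {x})).obj M →ₗ[k]
      (inducedCoinvariants k G).obj M :=
  subgroupCoinvLift (inducedCoinvMk M x) fun g hg m => by
    have hx : g * x * g⁻¹ = x :=
      mul_inv_eq_of_eq_mul (Subgroup.mem_centralizer_singleton_iff.1 hg)
    have h := inducedCoinvMk_conj g x m
    rwa [hx] at h

theorem centralizerCoinvHom_mk (x : G) {M : ModuleCat.{0} k[G]} (m : M) :
    centralizerCoinvHom x M (subgroupCoinvMk _ M m) = inducedCoinvMk M x m :=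
  subgroupCoinvLift_mk _ _ m

/-- `centralizerCoinvHom` as a natural transformation. -/
noncomputable def centralizerCoinvMap (x : G) :
    subgroupCoinvariants k (Subgroup.centralizer {x}) ⟶ inducedCoinvariants k G where
  app M := ModuleCat.ofHom (centralizerCoinvHom x M)
  naturality M M' f := by
    ext z
    obtain ⟨m, rfl⟩ := subgroupCoinvMk_surjective z
    calc centralizerCoinvHom x M'
          (((subgroupCoinvariants k (Subgroup.centralizer {x})).map f).hom (subgroupCoinvMk _ M m))
        = centralizerCoinvHom x M' (subgroupCoinvMk _ M' (f.hom m)) := by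
          rw [subgroupCoinvariants_map_mk]
      _ = inducedCoinvMk M' x (f.hom m) := centralizerCoinvHom_mk x _
      _ = ((inducedCoinvariants k G).map f).hom (inducedCoinvMk M x m) :=
          (inducedCoinvariants_map_mk f x m).symm
      _ = ((inducedCoinvariants k G).map f).hom
            (centralizerCoinvHom x M (subgroupCoinvMk _ M m)) := by
          rw [centralizerCoinvHom_mk]

theorem subgroupCoinvMk_centralizer_single_smul_eq {M : ModuleCat.{0} k[G]} {x y g h : G}
    (hg : g * x * g⁻¹ = y) (hh : h * x * h⁻¹ = y) (m : M) :
    subgroupCoinvMk (Subgroup.centralizer {y}) M ((single g 1 : k[G]) • m) =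
      subgroupCoinvMk (Subgroup.centralizer {y}) M ((single h 1 : k[G]) • m) := by
  have hc : g * h⁻¹ ∈ Subgroup.centralizer {y} := by
    rw [Subgroup.mem_centralizer_singleton_iff, ← hg]
    nth_rewrite 1 [hg, ← hh]
    group
  rw [← subgroupCoinvMk_single_smul hc ((single h 1 : k[G]) • m), smul_smul,
    single_mul_single, mul_one, inv_mul_cancel_right]

section Desc

variable {rep : ConjClasses G → G}

theorem exists_conj_eq_rep (hrep : ∀ c, ConjClasses.mk (rep c) = c) (x : G) :
    ∃ g, g * x * g⁻¹ = rep (ConjClasses.mk x) :=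
  isConj_iff.1 <| ConjClasses.mk_eq_mk_iff_isConj.1 (hrep _).symm

variable (hrep : ∀ c, ConjClasses.mk (rep c) = c)

/-- A chosen element conjugating `x` to the representative of its conjugacy class. -/
noncomputable def conjugator (x : G) : G := (exists_conj_eq_rep hrep x).choose

theorem conjugator_spec (x : G) :
    conjugator hrep x * x * (conjugator hrep x)⁻¹ = rep (ConjClasses.mk x) :=
  (exists_conj_eq_rep hrep x).choose_spec

variable {M : ModuleCat.{0} k[G]} {B : Type} [AddCommGroup B] [Module k B]
  (f : ∀ c, (subgroupCoinvariants k (Subgroup.centralizer {rep c})).obj M →ₗ[k] B)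

/-- The component at `x` of `inducedCoinvDesc`: move `x` to its representative `g * x * g⁻¹` and
apply `f` to the class of `g • m`. -/
noncomputable def conjComponent (x : G) : M →ₗ[k] B :=
  f (ConjClasses.mk x) ∘ₗ subgroupCoinvMk _ M ∘ₗ
    Algebra.lsmul k k M (single (conjugator hrep x) 1 : k[G])

variable {f} in
theorem conjComponent_apply {x g : G} {c : ConjClasses G} (hx : ConjClasses.mk x = c)
    (hg : g * x * g⁻¹ = rep c) (m : M) :
    conjComponent hrep f x m = f c (subgroupCoinvMk _ M ((single g 1 : k[G]) • m)) := by
  subst hx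
  exact congrArg _ (subgroupCoinvMk_centralizer_single_smul_eq (conjugator_spec hrep x) hg m)

theorem conjComponent_conj (g x : G) (m : M) :
    conjComponent hrep f (g * x * g⁻¹) ((single g 1 : k[G]) • m) = conjComponent hrep f x m := by
  have hx : ConjClasses.mk x = ConjClasses.mk (g * x * g⁻¹) :=
    ConjClasses.mk_eq_mk_iff_isConj.2 (isConj_iff.2 ⟨g, rfl⟩)
  have hc := conjugator_spec hrep (g * x * g⁻¹)
  rw [conjComponent_apply hrep hx (g := conjugator hrep (g * x * g⁻¹) * g) (by rw [← hc]; group),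
    conjComponent_apply hrep rfl hc, smul_smul, single_mul_single, mul_one]

/-- The map out of the bimodule coinvariants of `k[G] ⊗[k] M` determined by a family of maps out of
the centralizer coinvariants of `M`. -/
noncomputable def inducedCoinvDesc : (inducedCoinvariants k G).obj M →ₗ[k] B :=
  inducedCoinvLift (conjComponent_conj hrep f)

theorem inducedCoinvDesc_mk {x g : G} {c : ConjClasses G} (hx : ConjClasses.mk x = c)
    (hg : g * x * g⁻¹ = rep c) (m : M) :
    inducedCoinvDesc hrep f (inducedCoinvMk M x m) =
      f c (subgroupCoinvMk _ M ((single g 1 : k[G]) • m)) :=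
  (inducedCoinvLift_mk _ x m).trans (conjComponent_apply hrep hx hg m)

theorem inducedCoinvDesc_comp_centralizerCoinvHom (c : ConjClasses G) :
    inducedCoinvDesc hrep f ∘ₗ centralizerCoinvHom (rep c) M = f c := by
  ext z
  obtain ⟨m, rfl⟩ := subgroupCoinvMk_surjective z
  rw [LinearMap.comp_apply, centralizerCoinvHom_mk,
    inducedCoinvDesc_mk hrep f (hrep c) (g := 1) (by group), ← one_def, one_smul]

variable {f} in
theorem eq_inducedCoinvDesc {φ : (inducedCoinvariants k G).obj M →ₗ[k] B}
    (hφ : ∀ c, φ ∘ₗ centralizerCoinvHom (rep c) M = f c) :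
    φ = inducedCoinvDesc hrep f := by
  refine inducedCoinv_hom_ext fun x m => ?_
  rw [inducedCoinvDesc_mk hrep f rfl (conjugator_spec hrep x), ← hφ, LinearMap.comp_apply,
    centralizerCoinvHom_mk, ← inducedCoinvMk_conj (conjugator hrep x), conjugator_spec]

variable (k) in
/-- The bimodule coinvariants of `k[G] ⊗[k] M` are the coproduct over the conjugacy classes of the
centralizer coinvariants of `M`. -/
noncomputable def centralizerCoinvIsColimit (M : ModuleCat.{0} k[G]) :
    IsColimit (Cofan.mk ((inducedCoinvariants k G).obj M)
      fun c => (centralizerCoinvMap (rep c)).app M) :=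
  Cofan.IsColimit.mk _
    (fun s => ModuleCat.ofHom <| inducedCoinvDesc hrep fun c => (s.inj c).hom)
    (fun s c => ModuleCat.hom_ext <|
      inducedCoinvDesc_comp_centralizerCoinvHom hrep (fun c => (s.inj c).hom) c)
    (fun _ _ hφ => ModuleCat.hom_ext <|
      eq_inducedCoinvDesc hrep fun c => congrArg ModuleCat.Hom.hom (hφ c))

end Desc

end Centralizer

open DirectSum in
theorem hochschildHomology_groupAlgebra_general (k : Type) [CommRing k] (G : Type) [Group G]
    (rep : ConjClasses G → G) (hrep : ∀ c, ConjClasses.mk (rep c) = c) (n : ℕ) :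
    Nonempty ((HochschildHomology k (MonoidAlgebra k G) n) ≃ₗ[k]
      (⨁ c : ConjClasses G, GroupHomology k (Subgroup.centralizer {rep c}) n)) := by
  classical
  let triv : ModuleCat.{0} k[G] := .of k[G] k
  let C c := Subgroup.centralizer {rep c}
  let F := bimoduleCoinvariants k k[G]
  have indIso : HochschildHomology k k[G] n ≅ ((inducedBimodule k G ⋙ F).leftDerived n).obj triv :=
    (F.leftDerived n).mapIso (inducedBimoduleTrivialIso k G).symm ≪≫
      (leftDerivedCompObjIso (inducedBimodule k G) F n triv).symm
  have resIso c : ((subgroupCoinvariants k (C c)).leftDerived n).obj triv ≅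
      GroupHomology k (C c) n :=
    leftDerivedCompObjIso (restrictSubgroup k (C c)) (groupCoinvariants k (C c)) n triv ≪≫
      ((groupCoinvariants k (C c)).leftDerived n).mapIso (restrictSubgroupTrivialIso k (C c))
  have e := indIso ≪≫ leftDerivedObjIsoCoproduct (fun c => centralizerCoinvMap (rep c))
      (centralizerCoinvIsColimit k hrep) n triv ≪≫ Limits.Sigma.mapIso resIso ≪≫
      ModuleCat.coprodIsoDirectSum _
  exact ⟨e.toLinearEquiv⟩

end GroupAlgebra

open DirectSum in
/-- For a group `G` and a field `k`, the Hochschild homology of the group algebra `k[G]`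
decomposes as `HH_n(k[G], k[G]) ≅ ⊕_{c ∈ ⟨G⟩} H_n(C_G(g_c); k)`, the direct sum over the
conjugacy classes `c` of `G` of the group homology of the centralizer of a chosen
representative `g_c` of `c`. -/
theorem hochschildHomology_groupAlgebra (k : Type) [Field k] (G : Type) [Group G]
    (rep : ConjClasses G → G) (hrep : ∀ c, ConjClasses.mk (rep c) = c) (n : ℕ) :
    Nonempty ((HochschildHomology k (MonoidAlgebra k G) n) ≃ₗ[k]
      (⨁ c : ConjClasses G, GroupHomology k (Subgroup.centralizer {rep c}) n)) :=
  hochschildHomology_groupAlgebra_general k G rep hrep n
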